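/- LP-rounding gives a factor-5 guarantee for the general discrete guarding problem: let f : ℝ → ℝ be a terrain, G ⊆ ℝ a finite set of guards with nonnegative weights w : G → ℝ, and N ⊆ ℝ a finite set of points (possibly intersecting G). Suppose x : G → ℝ is nonnegative and for every p ∈ N, Σ_{g ∈ G, g sees p} x(g) ≥ 1. Then there exists A ⊆ G such that every p ∈ N is seen by some g ∈ A and Σ_{g ∈ A} w(g) ≤ 5·Σ_{g ∈ G} w(g)·x(g). -/

import Mathlib

/-!
Take every heavy guard, one with `x g ≥ 1/5`: this costs at most five times its share of the LP
value. A point `p` seen by no heavy guard receives its whole unit of coverage from light guards, and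
the guard at `p` itself (if any) contributes less than `1/5`, so the light guards strictly to the
left of `p`, or those strictly to the right, contribute at least `2/5`. It remains to solve the left
and the right problem, each at cost `5/2` times the LP value of the light guards.

This is possible because one-sided covering LPs are integral. By the order claim for terrains (for
`a < b < c < d`, if `a` sees `c` and `b` sees `d`, then `a` sees `d`), the one-sided visibility
matrix, suitably sorted, has no submatrix `[1 1; 1 0]`, and the local-ratio method rounds such LPs
without loss.
-/

open scoped Classical

/-- `a` sees `b` on the terrain `f`. -/
def Sees (f : ℝ → ℝ) (a b : ℝ) : Prop :=
  ∀ t ∈ Set.Icc (0:ℝ) 1, f ((1 - t) * a + t * b) ≤ (1 - t) * f a + t * f b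

/-- A visibility relation on a line with the combinatorial properties of terrains: it is symmetric
and satisfies the order claim. Its graphs are known as terrain-like graphs. -/
structure TerrainLike {α : Type*} [LT α] (R : α → α → Prop) : Prop where
  symm : ∀ ⦃a b⦄, R a b → R b a
  order_claim : ∀ ⦃a b c d⦄, a < b → b < c → c < d → R a c → R b d → R a d

/-- The incidence matrix `M`, with rows sorted by `k` and columns sorted by `l`, has no `2 × 2`
submatrix `[1 1; 1 0]`; rows or columns with equal keys count as sorted in either order. -/
def GammaFree {α β γ δ : Type*} [LE γ] [LE δ] (k : α → γ) (l : β → δ) (M : α → β → Prop) : Prop :=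
  ∀ ⦃g g' p p'⦄, k g ≤ k g' → l p ≤ l p' → M g p → M g p' → M g' p → M g' p'

namespace Sees

variable {f : ℝ → ℝ} {a b c d y : ℝ}

lemma symm (h : Sees f a b) : Sees f b a := by
  intro t ht
  have h_swap := h (1 - t) (Set.Icc.mem_iff_one_sub_mem.1 ht)
  rw [sub_sub_cancel] at h_swap
  rwa [add_comm, add_comm (_ * f b)]

lemma le_max (h : Sees f a b) (hy : y ∈ Set.Icc a b) : f y ≤ max (f a) (f b) := by
  rw [← segment_eq_Icc (hy.1.trans hy.2), segment_eq_image] at hy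
  obtain ⟨t, ht, rfl⟩ := hy
  exact (h t ht).trans (Convex.combo_le_max _ _ (sub_nonneg.2 ht.2) ht.1 (sub_add_cancel 1 t))

lemma lt_right (h : Sees f a b) (hy : y ∈ openSegment ℝ a b) (hlt : f a < f b) : f y < f b := by
  rw [openSegment_eq_image] at hy
  obtain ⟨t, ht, rfl⟩ := hy
  have := h t (Set.Ioo_subset_Icc_self ht)
  simp only [smul_eq_mul]
  nlinarith [ht.2]

lemma sub_affine_iff (m k : ℝ) : Sees (fun y ↦ f y - (m * y + k)) a b ↔ Sees f a b := by
  refine forall₂_congr fun t _ ↦ ?_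
  constructor <;> intro h <;> linarith

lemma order_claim_of_eq_zero (hab : a < b) (hbc : b < c) (hcd : c < d)
    (hac : Sees f a c) (hbd : Sees f b d) (ha : f a = 0) (hd : f d = 0) : Sees f a d := by
  have hb_le : f b ≤ max (f a) (f c) := hac.le_max ⟨hab.le, hbc.le⟩
  have hc_le : f c ≤ max (f b) (f d) := hbd.le_max ⟨hbc.le, hcd.le⟩
  have hc_nonpos : f c ≤ 0 := by
    by_contra! hc_pos
    have hb_lt_c : f b < f c :=
      hac.lt_right (openSegment_eq_Ioo (𝕜 := ℝ) (hab.trans hbc) ▸ ⟨hab, hbc⟩) (ha ▸ hc_pos)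
    have hb_pos : 0 < f b := by grind
    have hc_lt_b : f c < f b := by
      refine hbd.symm.lt_right ?_ (hd ▸ hb_pos)
      rw [openSegment_symm, openSegment_eq_Ioo (hbc.trans hcd)]
      exact ⟨hbc, hcd⟩
    exact hb_lt_c.asymm hc_lt_b
  have h_nonpos (y : ℝ) (hy : y ∈ Set.Icc a d) : f y ≤ 0 := by
    rcases le_total y c with hyc | hcy
    · exact (hac.le_max ⟨hy.1, hyc⟩).trans (max_le ha.le hc_nonpos)
    · exact (hbd.le_max ⟨hbc.le.trans hcy, hy.2⟩).trans (by grind)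
  intro t ht
  rw [ha, hd, mul_zero, mul_zero, add_zero]
  apply h_nonpos
  rw [← segment_eq_Icc (by order), segment_eq_image]
  exact ⟨t, ht, rfl⟩

lemma order_claim (hab : a < b) (hbc : b < c) (hcd : c < d) (hac : Sees f a c)
    (hbd : Sees f b d) : Sees f a d := by
  let m := (f d - f a) / (d - a)
  have h_slope : m * (d - a) = f d - f a := div_mul_cancel₀ _ (by linarith)
  rw [← sub_affine_iff m (f a - m * a)] at hac hbd ⊢
  exact order_claim_of_eq_zero hab hbc hcd hac hbd (by ring) (by linarith)

lemma terrainLike (f : ℝ → ℝ) : TerrainLike (Sees f) where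
  symm _ _ := symm
  order_claim _ _ _ _ := order_claim

end Sees

lemma sum_union_le_of_nonneg {α K : Type*} [DecidableEq α] [AddCommMonoid K] [PartialOrder K]
    [IsOrderedAddMonoid K] {A B : Finset α} {w : α → K} (hw : ∀ g ∈ A ∩ B, 0 ≤ w g) :
    ∑ g ∈ A ∪ B, w g ≤ ∑ g ∈ A, w g + ∑ g ∈ B, w g := by
  rw [← Finset.sum_union_inter]
  exact le_add_of_nonneg_right (Finset.sum_nonneg hw)

lemma mul_sum_le_sum_mul_of_le {α K : Type*} [CommSemiring K] [PartialOrder K] [IsOrderedRing K]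
    {A : Finset α} {w x : α → K} {c : K} (hw : ∀ g ∈ A, 0 ≤ w g) (hx : ∀ g ∈ A, c ≤ x g) :
    c * ∑ g ∈ A, w g ≤ ∑ g ∈ A, w g * x g := by
  rw [mul_comm, Finset.sum_mul]
  exact Finset.sum_le_sum fun g hg ↦ mul_le_mul_of_nonneg_left (hx g hg) (hw g hg)

lemma sum_sub_ite_mul {α K : Type*} [CommRing K] (A : Finset α) (P : α → Prop) (w x : α → K)
    (ε : K) : ∑ g ∈ A, (w g - if P g then ε else 0) * x g =
      ∑ g ∈ A, w g * x g - ε * ∑ g ∈ A with P g, x g := by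
  simp only [sub_mul, ite_mul, zero_mul, Finset.sum_sub_distrib, ← Finset.sum_filter,
    Finset.mul_sum]

namespace GammaFree

variable {α β γ δ K : Type*} [LinearOrder γ] {k : α → γ} {l : β → δ} {M : α → β → Prop}
  {G A : Finset α} {N : Finset β} {p : β} {w x : α → K}

lemma exists_dominating_guard [LE δ] (hM : GammaFree k l M) (hp : ∃ g ∈ A, M g p) :
    ∃ g₁ ∈ A, M g₁ p ∧ ∀ q, l p ≤ l q → ∀ g ∈ A, M g p → M g q → M g₁ q := by
  obtain ⟨g₁, hg₁, hmax⟩ :=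
    Finset.exists_max_image {g ∈ A | M g p} k (Finset.filter_nonempty_iff.2 hp)
  simp only [Finset.mem_filter] at hg₁ hmax
  exact ⟨g₁, hg₁.1, hg₁.2, fun q hpq g hg hgp hgq ↦ hM (hmax g ⟨hg, hgp⟩) hpq hgp hgq hg₁.2⟩

lemma exists_cover_insert_card_eq_one [LE δ] [AddCommMonoid K] [PartialOrder K]
    [IsOrderedAddMonoid K] (hM : GammaFree k l M) (hp : ∀ q ∈ N, l p ≤ l q) (hAG : A ⊆ G)
    (hA : ∀ q ∈ N, ∃ g ∈ A, M g q) (hw : ∀ g ∈ G, 0 ≤ w g) {g₀ : α} (hg₀ : g₀ ∈ G)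
    (hg₀p : M g₀ p) (hwg₀ : w g₀ = 0) :
    ∃ B ⊆ G, (∀ q ∈ insert p N, ∃ g ∈ B, M g q) ∧ ({g ∈ B | M g p} : Finset α).card = 1 ∧
      ∑ g ∈ B, w g ≤ ∑ g ∈ A, w g := by
  by_cases hAp : ∃ g ∈ A, M g p
  · obtain ⟨g₁, hg₁A, hg₁p, hg₁⟩ := hM.exists_dominating_guard hAp
    refine ⟨{g ∈ A | M g p → g = g₁}, (Finset.filter_subset _ _).trans hAG, ?_, ?_, ?_⟩
    · rw [Finset.forall_mem_insert]
      refine ⟨⟨g₁, by simp [hg₁A], hg₁p⟩, fun q hq ↦ ?_⟩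
      obtain ⟨g, hgA, hgq⟩ := hA q hq
      by_cases hgp : M g p
      · exact ⟨g₁, by simp [hg₁A], hg₁ q (hp q hq) g hgA hgp hgq⟩
      · exact ⟨g, by simp [hgA, hgp], hgq⟩
    · exact Finset.card_eq_one.2 ⟨g₁, by grind⟩
    · exact Finset.sum_le_sum_of_subset_of_nonneg (Finset.filter_subset _ _)
        fun g hg _ ↦ hw g (hAG hg)
  · refine ⟨insert g₀ A, Finset.insert_subset hg₀ hAG, ?_, ?_, ?_⟩
    · rw [Finset.forall_mem_insert]
      refine ⟨⟨g₀, Finset.mem_insert_self _ _, hg₀p⟩, fun q hq ↦ ?_⟩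
      obtain ⟨g, hgA, hgq⟩ := hA q hq
      exact ⟨g, Finset.mem_insert_of_mem hgA, hgq⟩
    · exact Finset.card_eq_one.2 ⟨g₀, by grind⟩
    · exact (Finset.sum_insert_zero hwg₀).le

/-- Local ratio: the least weight `ε` of a guard of the first point `p` is subtracted from the
weights of all guards of `p`. The cover of the remaining points then needs only one guard of `p`, so
restoring the weights costs `ε` once, while the LP pays at least `ε * c`. -/
theorem exists_cover [LinearOrder δ] [CommRing K] [LinearOrder K] [IsStrictOrderedRing K]
    (hM : GammaFree k l M) {c : K} (hc : 0 < c) (hw : ∀ g ∈ G, 0 ≤ w g)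
    (hx : ∀ g ∈ G, 0 ≤ x g) (hcov : ∀ p ∈ N, c ≤ ∑ g ∈ G with M g p, x g) :
    ∃ A ⊆ G, (∀ p ∈ N, ∃ g ∈ A, M g p) ∧ c * ∑ g ∈ A, w g ≤ ∑ g ∈ G, w g * x g := by
  induction N using Finset.induction_on_min_value l generalizing w with
  | empty =>
    exact ⟨∅, by simp, by simp,
      by simpa using Finset.sum_nonneg fun g hg ↦ mul_nonneg (hw g hg) (hx g hg)⟩
  | insert p N _ hmin ih =>
    rw [Finset.forall_mem_insert] at hcov
    obtain ⟨hp, hcovN⟩ := hcov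
    have h_guards : ({g ∈ G | M g p} : Finset α).Nonempty :=
      Finset.nonempty_of_sum_ne_zero (hc.trans_le hp).ne'
    obtain ⟨g₀, hg₀, hg₀min⟩ := Finset.exists_min_image _ w h_guards
    simp only [Finset.mem_filter] at hg₀ hg₀min
    let r : α → K := fun g ↦ w g - if M g p then w g₀ else 0
    have hr : ∀ g ∈ G, 0 ≤ r g := by grind
    obtain ⟨A, hAG, hA, hAr⟩ := ih hr hcovN
    obtain ⟨B, hBG, hB, hB_card, hBA⟩ :=
      hM.exists_cover_insert_card_eq_one hmin hAG hA hr hg₀.1 hg₀.2 (by simp [r, hg₀.2])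
    refine ⟨B, hBG, hB, ?_⟩
    have h_restore : ∑ g ∈ B, r g = ∑ g ∈ B, w g - w g₀ := by
      simpa only [Pi.one_apply, mul_one, Finset.sum_const, hB_card, one_smul] using
        sum_sub_ite_mul B (M · p) w 1 (w g₀)
    calc c * ∑ g ∈ B, w g = c * ∑ g ∈ B, r g + w g₀ * c := by rw [h_restore]; ring
      _ ≤ c * ∑ g ∈ A, r g + w g₀ * ∑ g ∈ G with M g p, x g := by
        gcongr
        exact hw g₀ hg₀.1
      _ ≤ ∑ g ∈ G, r g * x g + w g₀ * ∑ g ∈ G with M g p, x g := by gcongr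
      _ = ∑ g ∈ G, w g * x g := by rw [sum_sub_ite_mul, sub_add_cancel]

end GammaFree

section LinearOrder

variable {α : Type*} [LinearOrder α] {R : α → α → Prop}

/-- `g` covers `p` under `R` and lies strictly to its left: the incidence of the left problem. -/
def CoversFromLeft (R : α → α → Prop) (g p : α) : Prop := g < p ∧ R g p

/-- `g` covers `p` under `R` and lies strictly to its right: the incidence of the right problem. -/
def CoversFromRight (R : α → α → Prop) (g p : α) : Prop := p < g ∧ R g p

lemma TerrainLike.gammaFree_coversFromLeft (hR : TerrainLike R) :
    GammaFree OrderDual.toDual id (CoversFromLeft R) := by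
  rintro g g' p p' hg hp ⟨hgp, -⟩ ⟨hgp', hR_gp'⟩ ⟨hg'p, hR_g'p⟩
  rcases (OrderDual.toDual_le_toDual.1 hg).eq_or_lt with rfl | hg
  · exact ⟨hgp', hR_gp'⟩
  rcases hp.eq_or_lt with rfl | hp
  · exact ⟨hg'p, hR_g'p⟩
  exact ⟨hg.trans hgp', hR.order_claim hg hgp hp hR_g'p hR_gp'⟩

lemma TerrainLike.gammaFree_coversFromRight (hR : TerrainLike R) :
    GammaFree id OrderDual.toDual (CoversFromRight R) := by
  rintro g g' p p' hg hp ⟨hpg, -⟩ ⟨hp'g, hR_gp'⟩ ⟨hpg', hR_g'p⟩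
  rcases hg.eq_or_lt with rfl | hg
  · exact ⟨hp'g, hR_gp'⟩
  rcases (OrderDual.toDual_le_toDual.1 hp).eq_or_lt with rfl | hp
  · exact ⟨hpg', hR_g'p⟩
  exact ⟨hp'g.trans hg,
    hR.symm (hR.order_claim hp hpg hg (hR.symm hR_gp') (hR.symm hR_g'p))⟩

lemma sum_covers_le_left_add_right_add {K : Type*} [AddCommMonoid K] [PartialOrder K]
    [IsOrderedAddMonoid K] {G : Finset α} {x : α → K} (R : α → α → Prop) {ε : K} (hε : 0 ≤ ε)
    (hxε : ∀ g ∈ G, x g ≤ ε) (p : α) :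
    ∑ g ∈ G with R g p, x g ≤
      ∑ g ∈ G with CoversFromLeft R g p, x g + ∑ g ∈ G with CoversFromRight R g p, x g + ε := by
  have h_split : ∑ g ∈ G with R g p, x g = ∑ g ∈ G with CoversFromLeft R g p, x g +
      ∑ g ∈ G with CoversFromRight R g p, x g + ∑ g ∈ G with g = p ∧ R g p, x g := by
    simp only [Finset.sum_filter, ← Finset.sum_add_distrib]
    refine Finset.sum_congr rfl fun g _ ↦ ?_
    rcases lt_trichotomy g p with h | rfl | h
    · simp [CoversFromLeft, CoversFromRight, h, h.not_gt, h.ne]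
    · simp [CoversFromLeft, CoversFromRight]
    · simp [CoversFromLeft, CoversFromRight, h, h.not_gt, h.ne']
  have h_self : ∑ g ∈ G with g = p ∧ R g p, x g ≤ ε := by
    by_cases hp : p ∈ G ∧ R p p
    · rw [show ({g ∈ G | g = p ∧ R g p} : Finset α) = {p} by grind, Finset.sum_singleton]
      exact hxε p hp.1
    · rwa [show ({g ∈ G | g = p ∧ R g p} : Finset α) = ∅ by grind, Finset.sum_empty]
  rw [h_split]
  gcongr

theorem TerrainLike.exists_cover_of_le {K : Type*} [CommRing K] [LinearOrder K]
    [IsStrictOrderedRing K] {G N : Finset α} {w x : α → K} {c ε : K}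
    (hR : TerrainLike R) (hε : 0 ≤ ε) (hc : 0 < c) (hw : ∀ g ∈ G, 0 ≤ w g)
    (hx : ∀ g ∈ G, 0 ≤ x g) (hxε : ∀ g ∈ G, x g ≤ ε)
    (hcov : ∀ p ∈ N, 2 * c + ε ≤ ∑ g ∈ G with R g p, x g) :
    ∃ A ⊆ G, (∀ p ∈ N, ∃ g ∈ A, R g p) ∧ c * ∑ g ∈ A, w g ≤ 2 * ∑ g ∈ G, w g * x g := by
  obtain ⟨A, hAG, hA, hAw⟩ := hR.gammaFree_coversFromLeft.exists_cover hc hw hx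
    (N := {p ∈ N | c ≤ ∑ g ∈ G with CoversFromLeft R g p, x g})
    fun p hp ↦ (Finset.mem_filter.1 hp).2
  obtain ⟨B, hBG, hB, hBw⟩ := hR.gammaFree_coversFromRight.exists_cover hc hw hx
    (N := {p ∈ N | c ≤ ∑ g ∈ G with CoversFromRight R g p, x g})
    fun p hp ↦ (Finset.mem_filter.1 hp).2
  refine ⟨A ∪ B, Finset.union_subset hAG hBG, fun p hp ↦ ?_, ?_⟩
  · have h_sides := (hcov p hp).trans (sum_covers_le_left_add_right_add R hε hxε p)
    rcases le_or_gt c (∑ g ∈ G with CoversFromLeft R g p, x g) with h_left | h_left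
    · obtain ⟨g, hgA, hgp⟩ := hA p (Finset.mem_filter.2 ⟨hp, h_left⟩)
      exact ⟨g, Finset.mem_union_left B hgA, hgp.2⟩
    · obtain ⟨g, hgB, hgp⟩ := hB p (Finset.mem_filter.2 ⟨hp, by linarith⟩)
      exact ⟨g, Finset.mem_union_right A hgB, hgp.2⟩
  · calc c * ∑ g ∈ A ∪ B, w g ≤ c * (∑ g ∈ A, w g + ∑ g ∈ B, w g) := by
          gcongr
          exact sum_union_le_of_nonneg fun g hg ↦ hw g (hAG (Finset.mem_inter.1 hg).1)
      _ ≤ 2 * ∑ g ∈ G, w g * x g := by linarith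

theorem discrete_guarding_five_approx_general {K : Type*} [Field K] [LinearOrder K]
    [IsStrictOrderedRing K] (hR : TerrainLike R) {G N : Finset α} {w x : α → K}
    (hw : ∀ g ∈ G, 0 ≤ w g) (hx : ∀ g ∈ G, 0 ≤ x g)
    (hcov : ∀ p ∈ N, 1 ≤ ∑ g ∈ G with R g p, x g) :
    ∃ A ⊆ G, (∀ p ∈ N, ∃ g ∈ A, R g p) ∧ ∑ g ∈ A, w g ≤ 5 * ∑ g ∈ G, w g * x g := by
  let H := {g ∈ G | 1 / 5 ≤ x g}
  let L := {g ∈ G | ¬ 1 / 5 ≤ x g}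
  have hHG : H ⊆ G := Finset.filter_subset _ _
  have hLG : L ⊆ G := Finset.filter_subset _ _
  have hLcov : ∀ p ∈ {p ∈ N | ∀ g ∈ H, ¬ R g p}, 2 * (2 / 5) + 1 / 5 ≤ ∑ g ∈ L with R g p, x g := by
    intro p hp
    have h_light : ({g ∈ L | R g p} : Finset α) = {g ∈ G | R g p} := by grind
    rw [h_light]
    exact (hcov p (Finset.mem_filter.1 hp).1).trans' (by norm_num)
  obtain ⟨A, hAL, hA, hAw⟩ := hR.exists_cover_of_le (by norm_num) (by norm_num)
    (fun g hg ↦ hw g (hLG hg)) (fun g hg ↦ hx g (hLG hg))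
    (fun g hg ↦ (not_le.1 (Finset.mem_filter.1 hg).2).le) hLcov
  have hHw : 1 / 5 * ∑ g ∈ H, w g ≤ ∑ g ∈ H, w g * x g :=
    mul_sum_le_sum_mul_of_le (fun g hg ↦ hw g (hHG hg)) fun g hg ↦ (Finset.mem_filter.1 hg).2
  refine ⟨H ∪ A, Finset.union_subset hHG (hAL.trans hLG), fun p hp ↦ ?_, ?_⟩
  · by_cases hpH : ∃ g ∈ H, R g p
    · obtain ⟨g, hgH, hgp⟩ := hpH
      exact ⟨g, Finset.mem_union_left A hgH, hgp⟩
    · push Not at hpH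
      obtain ⟨g, hgA, hgp⟩ := hA p (Finset.mem_filter.2 ⟨hp, hpH⟩)
      exact ⟨g, Finset.mem_union_right H hgA, hgp⟩
  · calc ∑ g ∈ H ∪ A, w g ≤ ∑ g ∈ H, w g + ∑ g ∈ A, w g :=
          sum_union_le_of_nonneg fun g hg ↦ hw g (hHG (Finset.mem_inter.1 hg).1)
      _ ≤ 5 * (∑ g ∈ H, w g * x g + ∑ g ∈ L, w g * x g) := by linarith
      _ = 5 * ∑ g ∈ G, w g * x g := by rw [Finset.sum_filter_add_sum_filter_not]

end LinearOrder

/-- LP-rounding gives a factor-5 guarantee for the general discrete guarding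
problem (the point set may intersect the guard set). -/
theorem discrete_guarding_five_approx (f : ℝ → ℝ) (G N : Finset ℝ)
    (w x : ℝ → ℝ)
    (hw : ∀ g ∈ G, 0 ≤ w g) (hx : ∀ g ∈ G, 0 ≤ x g)
    (hcov : ∀ p ∈ N, 1 ≤ ∑ g ∈ G, if Sees f g p then x g else 0) :
    ∃ A ⊆ G, (∀ p ∈ N, ∃ g ∈ A, Sees f g p) ∧
      ∑ g ∈ A, w g ≤ 5 * ∑ g ∈ G, w g * x g := by
  simp only [← Finset.sum_filter] at hcov
  exact discrete_guarding_five_approx_general (Sees.terrainLike f) hw hx hcov
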